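/- Let R be a henselian Gorenstein Noetherian local ring and 𝒳 a resolving subcategory of the category of finitely generated R-modules. If 0 → N → C → M → 0 is a short exact sequence of finitely generated R-modules such that C ∈ 𝒞(𝒳) and both M and N admit right 𝒳-approximations, then M ∈ 𝒞(𝒳). -/

import Mathlib

open CategoryTheory IsLocalRing

universe u

noncomputable section

/-- The `i`-th Ext module of two `R`-modules. -/
abbrev ExtMod (R : Type u) [CommRing R] (i : ℕ) (M N : ModuleCat.{u} R) : ModuleCat R :=
  ((Ext R (ModuleCat.{u} R) i).obj (Opposite.op M)).obj N

/-- Vanishing of the `i`-th Ext module: `Ext_R^i(M, N) = 0`. -/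
def ExtVanish (R : Type u) [CommRing R] (i : ℕ) (M N : ModuleCat.{u} R) : Prop :=
  Subsingleton (ExtMod R i M N)

variable (R : Type u) [CommRing R]

/-- `0 → A → B → C → 0` is a short exact sequence. -/
def IsSES {A B C : ModuleCat.{u} R} (f : A →ₗ[R] B) (g : B →ₗ[R] C) : Prop :=
  Function.Injective f ∧ Function.Exact f g ∧ Function.Surjective g

/-- A resolving subcategory of the category of finitely generated `R`-modules. -/
structure IsResolving (𝒳 : Set (ModuleCat.{u} R)) : Prop where
  finite : ∀ M ∈ 𝒳, Module.Finite R M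
  isoClosed : ∀ {M N : ModuleCat.{u} R}, M ∈ 𝒳 → (↥M ≃ₗ[R] ↥N) → N ∈ 𝒳
  freeMem : ∀ M : ModuleCat.{u} R, Module.Finite R M → Module.Free R M → M ∈ 𝒳
  summandClosed : ∀ M N : ModuleCat.{u} R, ModuleCat.of R (↥M × ↥N) ∈ 𝒳 → M ∈ 𝒳
  extClosed : ∀ (A B C : ModuleCat.{u} R) (f : A →ₗ[R] B) (g : B →ₗ[R] C),
    IsSES R f g → A ∈ 𝒳 → C ∈ 𝒳 → B ∈ 𝒳
  kerClosed : ∀ (A B C : ModuleCat.{u} R) (f : A →ₗ[R] B) (g : B →ₗ[R] C),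
    IsSES R f g → B ∈ 𝒳 → C ∈ 𝒳 → A ∈ 𝒳

/-- `f : X → M` is a right `𝒳`-approximation of `M`. -/
def IsRightApprox (𝒳 : Set (ModuleCat.{u} R)) {X M : ModuleCat.{u} R} (f : X →ₗ[R] M) : Prop :=
  X ∈ 𝒳 ∧ ∀ W ∈ 𝒳, ∀ g : ↥W →ₗ[R] ↥M, ∃ h : ↥W →ₗ[R] ↥X, f ∘ₗ h = g

/-- `M` admits a right `𝒳`-approximation. -/
def HasRightApprox (𝒳 : Set (ModuleCat.{u} R)) (M : ModuleCat.{u} R) : Prop :=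
  ∃ (X : ModuleCat.{u} R) (f : X →ₗ[R] M), IsRightApprox R 𝒳 f

/-- `𝒳` is contravariantly infinite: no finitely generated module outside `𝒳` admits
a right `𝒳`-approximation. -/
def ContravariantlyInfinite (𝒳 : Set (ModuleCat.{u} R)) : Prop :=
  ∀ M : ModuleCat.{u} R, Module.Finite R M → M ∉ 𝒳 → ¬ HasRightApprox R 𝒳 M

/-- `𝒳` is contravariantly finite: every finitely generated module admits
a right `𝒳`-approximation. -/
def ContravariantlyFinite (𝒳 : Set (ModuleCat.{u} R)) : Prop :=
  ∀ M : ModuleCat.{u} R, Module.Finite R M → HasRightApprox R 𝒳 M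

/-- The restricted functor `Hom_R(-, C)|_𝒳` is finitely presented, i.e. `C ∈ 𝒞(𝒳)`. -/
def MemCC (𝒳 : Set (ModuleCat.{u} R)) (C : ModuleCat.{u} R) : Prop :=
  ∃ (X₀ X₁ : ModuleCat.{u} R) (g : ↥X₁ →ₗ[R] ↥X₀) (f : ↥X₀ →ₗ[R] ↥C), X₀ ∈ 𝒳 ∧ X₁ ∈ 𝒳 ∧
    ∀ W ∈ 𝒳, Function.Surjective (fun h : ↥W →ₗ[R] ↥X₀ => f ∘ₗ h) ∧
      Function.Exact (fun h : ↥W →ₗ[R] ↥X₁ => g ∘ₗ h) (fun h : ↥W →ₗ[R] ↥X₀ => f ∘ₗ h)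

/-- `𝒳` is coherent: `𝒞(𝒳) = rap 𝒳`. -/
def Coherent (𝒳 : Set (ModuleCat.{u} R)) : Prop :=
  ∀ M : ModuleCat.{u} R, Module.Finite R M → (MemCC R 𝒳 M ↔ HasRightApprox R 𝒳 M)

/-- The right Ext-orthogonal class `𝒳^⊥` of a class `𝒳` of finitely generated modules. -/
def XPerp (𝒳 : Set (ModuleCat.{u} R)) : Set (ModuleCat.{u} R) :=
  {Y | Module.Finite R Y ∧ ∀ X ∈ 𝒳, ∀ i, 0 < i → ExtVanish R i X Y}

/-- The projective dimension of `M` is at most `n`. -/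
def ProjDimLE (M : ModuleCat.{u} R) (n : ℕ) : Prop :=
  ∀ N : ModuleCat.{u} R, ∀ i, n < i → ExtVanish R i M N

/-- The depth of an `R`-module over a local ring: `inf { i | Ext^i(k, M) ≠ 0 }`. -/
def moduleDepth [IsLocalRing R] (M : ModuleCat.{u} R) : ℕ∞ :=
  sInf ((fun i : ℕ => (i : ℕ∞)) ''
    {i : ℕ | ¬ ExtVanish R i (ModuleCat.of R (ResidueField R)) M})

/-- `M` is a maximal Cohen–Macaulay `R`-module: `depth M ≥ dim R`. -/
def IsMCM [IsLocalRing R] (M : ModuleCat.{u} R) : Prop :=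
  ringKrullDim R ≤ (moduleDepth R M : WithBot ℕ∞)

/-- A Gorenstein local ring: `∃ n, Ext^i(M, R) = 0` for every finitely generated `M`
and every `i > n`. -/
def IsGorensteinLocalRing : Prop :=
  ∃ n : ℕ, ∀ M : ModuleCat.{u} R, Module.Finite R M →
    ∀ i, n < i → ExtVanish R i M (ModuleCat.of R R)

/-- A regular local ring: Noetherian local with `dim R = dim_k 𝔪/𝔪²`. -/
def IsRegularLocal [IsLocalRing R] : Prop :=
  IsNoetherianRing R ∧
    ringKrullDim R = (Module.finrank (ResidueField R) (CotangentSpace R) : ℕ)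

/-- Witness that the local ring `R` is a complete intersection: its `𝔪`-adic completion
is `Q/(f₁, …, f_c)` for a regular local ring `Q` and a `Q`-regular sequence `f₁, …, f_c`. -/
structure CompleteIntersectionWitness [IsLocalRing R] : Type (u + 1) where
  Q : Type u
  [commRing : CommRing Q]
  [localRing : IsLocalRing Q]
  regular : IsRegularLocal Q
  fs : List Q
  regSeq : RingTheory.Sequence.IsRegular Q fs
  equiv : AdicCompletion (maximalIdeal R) R ≃+* Q ⧸ Ideal.span {x : Q | x ∈ fs}

/-- The local ring `R` is a complete intersection. -/
def IsCompleteIntersection [IsLocalRing R] : Prop :=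
  Nonempty (CompleteIntersectionWitness R)

end

/-!
Over a henselian local ring, an endomorphism `φ` of a finitely generated module divides an
idempotent `e` such that `1 - φ` divides `1 - e`: the factorization `X ^ n * b` with `b(0) ≠ 0` of
the reduction of a monic polynomial annihilating `φ` lifts to a coprime factorization. If
`f ∘ φ = f`, then also `f ∘ e = f`, so a right `𝒳`-approximation whose domain needs the fewest
generators is right minimal.

Let `0 → N → P → Y → 0` be exact with `Y ∈ 𝒳`, and let `f : Z → N` be a right minimal approximation.
Presenting `Y` by a free module produces an extension `Q` of `Y` by `Z` and a map `ρ : Q → P` lying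
over `f`. Given `h : W → P` with `W ∈ 𝒳`, the difference of the two maps `Q ×_Y W → P` through `ρ`
and `h` has values in `N` and restricts to `f` on `Z`. As `f` is right minimal it is induced by a
retraction onto `Z`, and correcting by that retraction lifts `h` to `Q`; so `ρ` is an approximation.

Finally let `y : Y → M` be an approximation and `P = C ×_M Y`, an extension of `Y` by `N`. On `𝒳`,
the kernels of `Hom(-, Y) → Hom(-, M)` and of `Hom(-, P) → Hom(-, C)` agree, and the latter is
covered by a representable functor because `Hom(-, P)` is so and `Hom(-, C)` is finitely presented.
-/

section Henselian

open Polynomial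

variable {R : Type*} [CommRing R] [HenselianLocalRing R]

theorem exists_algHom_residue_eq_of_standardEtale {A : Type*} [CommRing A] [Algebra R A]
    [Algebra.IsStandardEtale R A] (ρ : A →ₐ[R] ResidueField R) :
    ∃ σ : A →ₐ[R] R, (Algebra.ofId R (ResidueField R)).comp σ = ρ := by
  obtain ⟨S⟩ := Algebra.IsStandardEtale.nonempty_standardEtalePresentation (R := R) (S := A)
  have hroot : S.P.HasMap (ρ S.x) := S.hasMap.map ρ
  have simple_root_lifts :=
    ((HenselianLocalRing.TFAE R).out 0 1).mp (inferInstance : HenselianLocalRing R)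
  obtain ⟨a, ha, haρ⟩ :=
    simple_root_lifts S.P.f S.P.monic_f (ρ S.x) hroot.1 hroot.isUnit_derivative_f.ne_zero
  have hg : IsUnit (aeval a S.P.g) := by
    rw [← isUnit_map_iff (residue R), ← ResidueField.algebraMap_eq, ← aeval_algebraMap_apply,
      ResidueField.algebraMap_eq, haρ]
    exact hroot.2
  have hmap : S.P.HasMap a := ⟨by simpa [IsRoot] using ha, hg⟩
  refine ⟨(S.P.lift a hmap).comp S.equivRing.toAlgHom, S.hom_ext ?_⟩
  simpa [Algebra.ofId_apply] using haρ

theorem exists_algHom_residue_eq_of_etale {A : Type*} [CommRing A] [Algebra R A]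
    [Algebra.Etale R A] (ρ : A →ₐ[R] ResidueField R) :
    ∃ σ : A →ₐ[R] R, (Algebra.ofId R (ResidueField R)).comp σ = ρ := by
  have : (RingHom.ker ρ).IsPrime := RingHom.ker_isPrime _
  obtain ⟨s, hs, _⟩ := Algebra.IsEtaleAt.exists_isStandardEtale (R := R) (RingHom.ker ρ)
  have hsρ : IsUnit (ρ s) := isUnit_iff_ne_zero.mpr hs
  let ρ' : Localization.Away s →ₐ[R] ResidueField R :=
    IsLocalization.Away.liftAlgHom s (f := ρ) hsρ
  obtain ⟨σ, hσ⟩ := exists_algHom_residue_eq_of_standardEtale ρ'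
  refine ⟨σ.comp (IsScalarTower.toAlgHom R A (Localization.Away s)), ?_⟩
  rw [← AlgHom.comp_assoc, hσ]
  ext x
  simp [ρ']

theorem exists_mul_eq_of_map_residue_eq_mul {p : R[X]} (hp : p.Monic)
    {a b : (ResidueField R)[X]} (ha : a.Monic) (hb : b.Monic) (hab : IsCoprime a b)
    (hpab : p.map (residue R) = a * b) :
    ∃ P Q : R[X], P * Q = p ∧ IsCoprime P Q ∧ P.map (residue R) = a ∧ Q.map (residue R) = b := by
  have hdeg : p.natDegree = a.natDegree + b.natDegree := by
    rw [← ha.natDegree_mul hb, ← hpab, hp.natDegree_map]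
  let 𝔭 : MonicDegreeEq R p.natDegree := .mk p hp rfl
  let factors (S) [CommRing S] [Algebra R S] :=
    UniversalCoprimeFactorizationRing.homEquiv S a.natDegree b.natDegree hdeg 𝔭
  let ρ := (factors (ResidueField R)).symm ⟨(.mk a ha rfl, .mk b hb rfl), hpab.symm, hab⟩
  obtain ⟨σ, hσ⟩ := exists_algHom_residue_eq_of_etale ρ
  have hρ : factors (ResidueField R) ρ = _ := Equiv.apply_symm_apply _ _
  have hfst := congrArg Subtype.val <| UniversalCoprimeFactorizationRing.homEquiv_comp_fst
    _ _ _ hdeg 𝔭 σ (Algebra.ofId R (ResidueField R))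
  have hsnd := congrArg Subtype.val <| UniversalCoprimeFactorizationRing.homEquiv_comp_snd
    _ _ _ hdeg 𝔭 σ (Algebra.ofId R (ResidueField R))
  rw [hσ] at hfst hsnd
  change (factors (ResidueField R) ρ).1.1.1 = (factors R σ).1.1.1.map (residue R) at hfst
  change (factors (ResidueField R) ρ).1.2.1 = (factors R σ).1.2.1.map (residue R) at hsnd
  rw [hρ] at hfst hsnd
  exact ⟨(factors R σ).1.1.1, (factors R σ).1.2.1, by simpa [𝔭] using (factors R σ).2.1,
    (factors R σ).2.2, hfst.symm, hsnd.symm⟩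

theorem isCoprime_X_sub_C_of_isUnit_eval {R : Type*} [CommRing R] {p : R[X]} {r : R}
    (h : IsUnit (p.eval r)) : IsCoprime p (X - C r) := by
  obtain ⟨q, hq⟩ := X_sub_C_dvd_sub_C_eval (a := r) (p := p)
  obtain ⟨c, hc⟩ := (isUnit_C.mpr h).exists_left_inv
  exact ⟨c, -(c * q), by linear_combination c * hq + hc⟩

theorem exists_isIdempotentElem_dvd_of_isCoprime {B : Type*} [CommRing B] {x y z : B}
    (hyz : y * z = 0) (hcoprime : IsCoprime y z) (hy : IsCoprime y (1 - x)) (hz : IsCoprime z x) :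
    ∃ e : B, IsIdempotentElem e ∧ x ∣ e ∧ 1 - x ∣ 1 - e := by
  obtain ⟨u, v, huv⟩ := hcoprime
  have dvd_of_mul_eq_zero {s t w : B} (hst : IsCoprime s t) (hsw : s * w = 0) : t ∣ w :=
    hst.symm.dvd_of_dvd_mul_left (hsw ▸ dvd_zero t)
  refine ⟨u * y, ?_, dvd_of_mul_eq_zero hz ?_, dvd_of_mul_eq_zero hy ?_⟩
  · rw [IsIdempotentElem]
    linear_combination (u * y) * huv - u * v * hyz
  · linear_combination u * hyz
  · linear_combination v * hyz - y * huv

theorem exists_isIdempotentElem_dvd_of_isIntegral {B : Type*} [CommRing B] [Algebra R B] {x : B}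
    (hx : IsIntegral R x) : ∃ e : B, IsIdempotentElem e ∧ x ∣ e ∧ 1 - x ∣ 1 - e := by
  obtain ⟨p, hp, hpx⟩ := hx
  obtain ⟨b, hpb, hXb⟩ := exists_eq_pow_rootMultiplicity_mul_and_not_dvd
    (p.map (residue R)) (hp.map _).ne_zero 0
  set n := (p.map (residue R)).rootMultiplicity 0
  rw [C_0, sub_zero] at hpb hXb
  have hb : b.Monic := (monic_X_pow n).of_mul_monic_left (hpb ▸ hp.map _)
  have hcoprime : IsCoprime (X ^ n) b := (irreducible_X.coprime_iff_not_dvd.mpr hXb).pow_left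
  obtain ⟨P, Q, rfl, hPQ, hP, hQ⟩ :=
    exists_mul_eq_of_map_residue_eq_mul hp (monic_X_pow n) hb hcoprime hpb
  have hP1 : IsUnit (P.eval 1) := by
    rw [← isUnit_map_iff (residue R), ← eval_map_apply, hP]
    simp
  have hQ0 : IsUnit (Q.eval 0) := by
    rw [← isUnit_map_iff (residue R), ← eval_map_apply, hQ, map_zero, isUnit_iff_ne_zero,
      ← coeff_zero_eq_eval_zero]
    exact X_dvd_iff.not.mp hXb
  refine exists_isIdempotentElem_dvd_of_isCoprime (y := aeval x P) (z := aeval x Q)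
    (by rw [← map_mul]; exact hpx) (hPQ.map (aeval x).toRingHom) ?_ ?_
  · have := (isCoprime_X_sub_C_of_isUnit_eval hP1).map (aeval (R := R) x).toRingHom
    simpa using this.neg_right
  · simpa using (isCoprime_X_sub_C_of_isUnit_eval hQ0).map (aeval (R := R) x).toRingHom

theorem exists_isIdempotentElem_eq_mul_of_isIntegral {A : Type*} [Ring A] [Algebra R A] {x : A}
    (hx : IsIntegral R x) :
    ∃ e a b : A, IsIdempotentElem e ∧ e = x * a ∧ e = a * x ∧ 1 - e = (1 - x) * b := by
  let B := Algebra.adjoin R {x}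
  let x' : B := ⟨x, Algebra.self_mem_adjoin_singleton R x⟩
  have hx' : IsIntegral R x' := (isIntegral_algHom_iff B.val Subtype.val_injective).mp hx
  obtain ⟨e, he, ⟨a, hea⟩, b, heb⟩ := exists_isIdempotentElem_dvd_of_isIntegral hx'
  exact ⟨e, a, b, congrArg B.val he, congrArg B.val hea,
    congrArg B.val (hea.trans (mul_comm x' a)), congrArg B.val heb⟩

end Henselian

section RightMinimal

open scoped TensorProduct

/-- A homomorphism `f : Z → N` is right minimal if every endomorphism `φ` of `Z` with `f ∘ φ = f`
is an automorphism. -/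
def IsRightMinimal {R Z N : Type*} [Semiring R] [AddCommMonoid Z] [AddCommMonoid N] [Module R Z]
    [Module R N] (f : Z →ₗ[R] N) : Prop :=
  ∀ φ : Module.End R Z, f ∘ₗ φ = f → IsUnit φ

theorem eq_one_of_finrank_tensorProduct_le_range {R Z : Type*} [CommRing R] [IsLocalRing R]
    [AddCommGroup Z] [Module R Z] [Module.Finite R Z] {e : Module.End R Z}
    (he : IsIdempotentElem e)
    (hle : Module.finrank (ResidueField R) (ResidueField R ⊗[R] Z) ≤
      Module.finrank (ResidueField R) (ResidueField R ⊗[R] LinearMap.range e)) : e = 1 := by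
  have hsplit := (LinearMap.range e).prodEquivOfIsCompl (LinearMap.ker e)
    (LinearMap.IsIdempotentElem.isCompl he)
  have : Module.Finite R (LinearMap.ker e) := by
    rw [LinearMap.IsIdempotentElem.ker_eq_range_one_sub he]
    infer_instance
  have hadd : Module.finrank (ResidueField R) (ResidueField R ⊗[R] Z) =
      Module.finrank (ResidueField R) (ResidueField R ⊗[R] LinearMap.range e) +
        Module.finrank (ResidueField R) (ResidueField R ⊗[R] LinearMap.ker e) := by
    rw [← Module.finrank_prod, ← (hsplit.baseChange R (ResidueField R) _ _).finrank_eq]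
    exact (TensorProduct.prodRight R (ResidueField R) _ _ _).finrank_eq
  have hker : Subsingleton (LinearMap.ker e) := by
    rw [← subsingleton_tensorProduct (R := R), ← Module.finrank_zero_iff (R := ResidueField R)]
    omega
  have hinj : Function.Injective e :=
    LinearMap.ker_eq_bot.mp (Submodule.subsingleton_iff_eq_bot.mp hker)
  ext z
  exact hinj (LinearMap.congr_fun he z)

variable {R : Type u} [CommRing R] {𝒳 : Set (ModuleCat.{u} R)}

theorem IsRightApprox.comp_subtype_range (h𝒳 : IsResolving R 𝒳) {Z N : ModuleCat.{u} R}
    {f : Z →ₗ[R] N} (hf : IsRightApprox R 𝒳 f) {e : Module.End R Z} (he : IsIdempotentElem e)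
    (hfe : f ∘ₗ e = f) :
    IsRightApprox R 𝒳 (X := .of R (LinearMap.range e)) (f ∘ₗ (LinearMap.range e).subtype) := by
  have hsplit := (LinearMap.range e).prodEquivOfIsCompl (LinearMap.ker e)
    (LinearMap.IsIdempotentElem.isCompl he)
  refine ⟨h𝒳.summandClosed _ (.of R (LinearMap.ker e)) (h𝒳.isoClosed hf.1 hsplit.symm),
    fun W hW g => ?_⟩
  obtain ⟨h, rfl⟩ := hf.2 W hW g
  exact ⟨e.rangeRestrict ∘ₗ h, LinearMap.ext fun w => LinearMap.congr_fun hfe (h w)⟩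

theorem HasRightApprox.exists_isRightMinimal [HenselianLocalRing R] (h𝒳 : IsResolving R 𝒳)
    {N : ModuleCat.{u} R} (hN : HasRightApprox R 𝒳 N) :
    ∃ (Z : ModuleCat.{u} R) (f : Z →ₗ[R] N), IsRightApprox R 𝒳 f ∧ IsRightMinimal f := by
  obtain ⟨Z₀, f₀, hf₀⟩ := hN
  -- By Nakayama's lemma this minimizes the number of generators of the domain.
  obtain ⟨⟨Z, f⟩, hf, hmin⟩ := exists_minimalFor_of_wellFoundedLT
    (fun p : (Z : ModuleCat.{u} R) × (Z →ₗ[R] N) => IsRightApprox R 𝒳 p.2)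
    (fun p => Module.finrank (ResidueField R) (ResidueField R ⊗[R] p.1)) ⟨⟨Z₀, f₀⟩, hf₀⟩
  refine ⟨Z, f, hf, fun φ hφ => ?_⟩
  have : Module.Finite R Z := h𝒳.finite Z hf.1
  obtain ⟨e, a, b, he, hea, hea', heb⟩ :=
    exists_isIdempotentElem_eq_mul_of_isIntegral (Algebra.IsIntegral.isIntegral (R := R) φ)
  have hfe : f ∘ₗ e = f := by
    have : f ∘ₗ (1 - e) = 0 := by
      rw [heb, Module.End.mul_eq_comp, ← LinearMap.comp_assoc, LinearMap.comp_sub, hφ,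
        Module.End.one_eq_id, LinearMap.comp_id, sub_self, LinearMap.zero_comp]
    rw [LinearMap.comp_sub, sub_eq_zero] at this
    exact this.symm
  have he1 : e = 1 := eq_one_of_finrank_tensorProduct_le_range he <|
    (le_total _ _).elim id
      (hmin (j := ⟨.of R (LinearMap.range e), _⟩) (hf.comp_subtype_range h𝒳 he hfe))
  subst he1
  exact isUnit_iff_exists.mpr ⟨a, hea.symm, hea'.symm⟩

theorem IsRightMinimal.exists_retraction {Z E N : ModuleCat.{u} R} {f : Z →ₗ[R] N}
    (hmin : IsRightMinimal f) (hf : IsRightApprox R 𝒳 f) (hE : E ∈ 𝒳) {κ : Z →ₗ[R] E}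
    {θ : E →ₗ[R] N} (hθ : θ ∘ₗ κ = f) :
    ∃ r : E →ₗ[R] Z, r ∘ₗ κ = LinearMap.id ∧ f ∘ₗ r = θ := by
  obtain ⟨η, rfl⟩ := hf.2 E hE θ
  obtain ⟨φ, hφ⟩ := hmin (η ∘ₗ κ) hθ
  have hfφ : f ∘ₗ φ.val = f := hφ ▸ hθ
  have hfφ_inv : f ∘ₗ φ.inv = f := by
    conv_lhs => rw [← hfφ]
    exact congrArg (f ∘ₗ ·) φ.val_inv
  refine ⟨φ.inv ∘ₗ η, ?_, by rw [← LinearMap.comp_assoc, hfφ_inv]⟩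
  rw [LinearMap.comp_assoc, ← hφ]
  exact φ.inv_val

end RightMinimal

section ShortExact

variable {R : Type u} [CommRing R]

theorem IsSES.comp_eq_zero {A B C : ModuleCat.{u} R} {i : A →ₗ[R] B} {π : B →ₗ[R] C}
    (h : IsSES R i π) : π ∘ₗ i = 0 :=
  h.2.1.linearMap_comp_eq_zero

theorem IsSES.exists_lift {A B C : ModuleCat.{u} R} {i : A →ₗ[R] B} {π : B →ₗ[R] C}
    (h : IsSES R i π) {V : Type*} [AddCommGroup V] [Module R V] {t : V →ₗ[R] B}
    (ht : π ∘ₗ t = 0) : ∃ t' : V →ₗ[R] A, i ∘ₗ t' = t := by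
  have hmem (v : V) : t v ∈ LinearMap.range i := (h.2.1 _).mp (LinearMap.congr_fun ht v)
  refine ⟨(LinearEquiv.ofInjective i h.1).symm.toLinearMap ∘ₗ t.codRestrict _ hmem, ?_⟩
  ext v
  exact congrArg Subtype.val
    ((LinearEquiv.ofInjective i h.1).apply_symm_apply (t.codRestrict _ hmem v))

theorem IsSES.exists_desc {A B C : ModuleCat.{u} R} {i : A →ₗ[R] B} {π : B →ₗ[R] C}
    (h : IsSES R i π) {V : Type*} [AddCommGroup V] [Module R V] {a : B →ₗ[R] V}
    (ha : a ∘ₗ i = 0) : ∃ a' : C →ₗ[R] V, a' ∘ₗ π = a := by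
  have hker : LinearMap.ker π ≤ LinearMap.ker a := by
    rw [LinearMap.exact_iff.mp h.2.1]
    exact LinearMap.range_le_ker_iff.mpr ha
  refine ⟨(LinearMap.ker π).liftQ a hker ∘ₗ
    (π.quotKerEquivOfSurjective h.2.2).symm.toLinearMap, ?_⟩
  ext b
  simp

/-- The fiber product `B ×_C Y` of two homomorphisms `g : B → C` and `y : Y → C`. -/
def fiberProduct {B C Y : Type*} [AddCommGroup B] [AddCommGroup C] [AddCommGroup Y] [Module R B]
    [Module R C] [Module R Y] (g : B →ₗ[R] C) (y : Y →ₗ[R] C) : Submodule R (B × Y) :=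
  LinearMap.eqLocus (g ∘ₗ LinearMap.fst R B Y) (y ∘ₗ LinearMap.snd R B Y)

namespace fiberProduct

variable {B C Y : Type*} [AddCommGroup B] [AddCommGroup C] [AddCommGroup Y] [Module R B]
  [Module R C] [Module R Y] (g : B →ₗ[R] C) (y : Y →ₗ[R] C)

/-- The first projection of a fiber product. -/
def fst : fiberProduct g y →ₗ[R] B :=
  LinearMap.fst R B Y ∘ₗ (fiberProduct g y).subtype

/-- The second projection of a fiber product. -/
def snd : fiberProduct g y →ₗ[R] Y :=
  LinearMap.snd R B Y ∘ₗ (fiberProduct g y).subtype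

theorem condition : g ∘ₗ fst g y = y ∘ₗ snd g y :=
  LinearMap.ext fun p => p.2

variable {g y}

/-- The homomorphism into a fiber product given by its universal property. -/
def lift {V : Type*} [AddCommGroup V] [Module R V] (a : V →ₗ[R] B) (b : V →ₗ[R] Y)
    (h : g ∘ₗ a = y ∘ₗ b) : V →ₗ[R] fiberProduct g y :=
  (a.prod b).codRestrict _ (LinearMap.congr_fun h)

@[simp]
theorem fst_comp_lift {V : Type*} [AddCommGroup V] [Module R V] (a : V →ₗ[R] B) (b : V →ₗ[R] Y)
    (h : g ∘ₗ a = y ∘ₗ b) : fst g y ∘ₗ lift a b h = a :=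
  rfl

@[simp]
theorem snd_comp_lift {V : Type*} [AddCommGroup V] [Module R V] (a : V →ₗ[R] B) (b : V →ₗ[R] Y)
    (h : g ∘ₗ a = y ∘ₗ b) : snd g y ∘ₗ lift a b h = b :=
  rfl

end fiberProduct

theorem IsSES.fiberProduct_snd {A B C : ModuleCat.{u} R} {i : A →ₗ[R] B} {g : B →ₗ[R] C}
    (h : IsSES R i g) {Y : ModuleCat.{u} R} (y : Y →ₗ[R] C) :
    IsSES R (B := .of R (fiberProduct g y))
      (fiberProduct.lift i 0 (h.comp_eq_zero.trans y.comp_zero.symm)) (fiberProduct.snd g y) := by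
  refine ⟨fun a a' haa' => h.1 (congrArg (fiberProduct.fst g y) haa'), fun p => ⟨?_, ?_⟩,
    fun b => ?_⟩
  · obtain ⟨⟨b, y'⟩, hp⟩ := p
    rintro (rfl : y' = 0)
    obtain ⟨a, rfl⟩ := (h.2.1 b).mp (LinearMap.mem_eqLocus.mp hp |>.trans y.map_zero)
    exact ⟨a, rfl⟩
  · rintro ⟨a, rfl⟩
    rfl
  · obtain ⟨a, ha⟩ := h.2.2 (y b)
    exact ⟨⟨(a, b), ha⟩, rfl⟩

/-- The amalgamated sum `B ⊔_A B'`, i.e. the pushout of two homomorphisms `α : A → B` and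
`β : A → B'`. -/
abbrev AmalgamatedSum {A B B' : Type*} [AddCommGroup A] [AddCommGroup B] [AddCommGroup B']
    [Module R A] [Module R B] [Module R B'] (α : A →ₗ[R] B) (β : A →ₗ[R] B') : Type _ :=
  (B × B') ⧸ LinearMap.range (α.prod (-β))

namespace AmalgamatedSum

variable {A B B' : Type*} [AddCommGroup A] [AddCommGroup B] [AddCommGroup B'] [Module R A]
  [Module R B] [Module R B'] (α : A →ₗ[R] B) (β : A →ₗ[R] B')

/-- The first inclusion into an amalgamated sum. -/
def inl : B →ₗ[R] AmalgamatedSum α β :=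
  Submodule.mkQ _ ∘ₗ LinearMap.inl R B B'

/-- The second inclusion into an amalgamated sum. -/
def inr : B' →ₗ[R] AmalgamatedSum α β :=
  Submodule.mkQ _ ∘ₗ LinearMap.inr R B B'

theorem inl_apply_eq_inr_apply (a : A) : inl α β (α a) = inr α β (β a) :=
  (Submodule.Quotient.eq _).mpr ⟨a, by simp⟩

variable {α β}

theorem exists_eq_inl_add_inr (q : AmalgamatedSum α β) : ∃ b b', q = inl α β b + inr α β b' := by
  obtain ⟨⟨b, b'⟩, rfl⟩ := Submodule.mkQ_surjective _ q
  exact ⟨b, b', congrArg (Submodule.mkQ _) (by simp : (b, b') = (b, 0) + (0, b'))⟩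

/-- The homomorphism out of an amalgamated sum given by its universal property. -/
def desc {V : Type*} [AddCommGroup V] [Module R V] (b : B →ₗ[R] V) (b' : B' →ₗ[R] V)
    (h : b ∘ₗ α = b' ∘ₗ β) : AmalgamatedSum α β →ₗ[R] V :=
  Submodule.liftQ _ (b.coprod b') <| by
    rintro _ ⟨a, rfl⟩
    simpa [← sub_eq_add_neg, sub_eq_zero] using LinearMap.congr_fun h a

@[simp]
theorem desc_comp_inl {V : Type*} [AddCommGroup V] [Module R V] (b : B →ₗ[R] V) (b' : B' →ₗ[R] V)
    (h : b ∘ₗ α = b' ∘ₗ β) : desc b b' h ∘ₗ inl α β = b := by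
  rw [desc, inl, ← LinearMap.comp_assoc, Submodule.liftQ_mkQ, LinearMap.coprod_inl]

@[simp]
theorem desc_comp_inr {V : Type*} [AddCommGroup V] [Module R V] (b : B →ₗ[R] V) (b' : B' →ₗ[R] V)
    (h : b ∘ₗ α = b' ∘ₗ β) : desc b b' h ∘ₗ inr α β = b' := by
  rw [desc, inr, ← LinearMap.comp_assoc, Submodule.liftQ_mkQ, LinearMap.coprod_inr]

theorem hom_ext {V : Type*} [AddCommGroup V] [Module R V] {s t : AmalgamatedSum α β →ₗ[R] V}
    (hl : s ∘ₗ inl α β = t ∘ₗ inl α β) (hr : s ∘ₗ inr α β = t ∘ₗ inr α β) : s = t :=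
  Submodule.linearMap_qext _ (LinearMap.prod_ext hl hr)

end AmalgamatedSum

theorem IsSES.amalgamatedSum_inl {A B C : ModuleCat.{u} R} {i : A →ₗ[R] B} {π : B →ₗ[R] C}
    (h : IsSES R i π) {Z : ModuleCat.{u} R} (t : A →ₗ[R] Z) :
    IsSES R (B := .of R (AmalgamatedSum t i)) (AmalgamatedSum.inl t i)
      (AmalgamatedSum.desc 0 π (t.zero_comp.trans h.comp_eq_zero.symm)) := by
  have hcond : 0 ∘ₗ t = π ∘ₗ i := t.zero_comp.trans h.comp_eq_zero.symm
  have hinl (z : Z) : AmalgamatedSum.desc 0 π hcond (AmalgamatedSum.inl t i z) = 0 :=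
    LinearMap.congr_fun (AmalgamatedSum.desc_comp_inl 0 π hcond) z
  have hinr (b : B) : AmalgamatedSum.desc 0 π hcond (AmalgamatedSum.inr t i b) = π b :=
    LinearMap.congr_fun (AmalgamatedSum.desc_comp_inr 0 π hcond) b
  refine ⟨?_, fun q => ⟨fun hq => ?_, ?_⟩, fun c => ?_⟩
  · rw [injective_iff_map_eq_zero]
    intro z hz
    obtain ⟨a, ha⟩ := (Submodule.Quotient.mk_eq_zero _).mp hz
    obtain ⟨rfl, hia⟩ := Prod.ext_iff.mp ha
    rw [h.1 ((neg_eq_zero.mp hia).trans i.map_zero.symm)]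
    exact t.map_zero
  · obtain ⟨z, b, rfl⟩ := AmalgamatedSum.exists_eq_inl_add_inr q
    rw [map_add, hinl, hinr, zero_add] at hq
    obtain ⟨a, rfl⟩ := (h.2.1 b).mp hq
    exact ⟨z + t a, by rw [map_add, AmalgamatedSum.inl_apply_eq_inr_apply]⟩
  · rintro ⟨z, rfl⟩
    exact hinl z
  · obtain ⟨b, rfl⟩ := h.2.2 c
    exact ⟨AmalgamatedSum.inr t i b, hinr b⟩

end ShortExact

section Extension

variable {R : Type u} [CommRing R] {𝒳 : Set (ModuleCat.{u} R)}

theorem IsResolving.exists_free_cover (h𝒳 : IsResolving R 𝒳) {Y : ModuleCat.{u} R} (hY : Y ∈ 𝒳) :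
    ∃ (K F : ModuleCat.{u} R) (i : K →ₗ[R] F) (p : F →ₗ[R] Y),
      K ∈ 𝒳 ∧ Module.Free R F ∧ IsSES R i p := by
  have := h𝒳.finite Y hY
  obtain ⟨n, p, hp⟩ := Module.Finite.exists_fin' R Y
  let K : ModuleCat.{u} R := .of R (LinearMap.ker p)
  let F : ModuleCat.{u} R := .of R (Fin n → R)
  have hF : Module.Free R F := inferInstanceAs (Module.Free R (Fin n → R))
  have hses : IsSES R (A := K) (B := F) (LinearMap.ker p).subtype p :=
    ⟨Subtype.val_injective, p.exact_subtype_ker_map, hp⟩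
  have hFmem : F ∈ 𝒳 := h𝒳.freeMem F (inferInstanceAs (Module.Finite R (Fin n → R))) hF
  exact ⟨K, F, (LinearMap.ker p).subtype, p, h𝒳.kerClosed _ _ _ _ _ hses hFmem hY, hF, hses⟩

theorem IsResolving.prod_mem (h𝒳 : IsResolving R 𝒳) {A B : ModuleCat.{u} R} (hA : A ∈ 𝒳)
    (hB : B ∈ 𝒳) : ModuleCat.of R (A × B) ∈ 𝒳 :=
  h𝒳.extClosed A (.of R (A × B)) B (LinearMap.inl R A B) (LinearMap.snd R A B)
    ⟨LinearMap.inl_injective, .inl_snd, LinearMap.snd_surjective⟩ hA hB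

theorem IsRightApprox.exists_isSES_lift (h𝒳 : IsResolving R 𝒳) {N P Y Z : ModuleCat.{u} R}
    {i : N →ₗ[R] P} {π : P →ₗ[R] Y} (hs : IsSES R i π) (hY : Y ∈ 𝒳) {f : Z →ₗ[R] N}
    (hf : IsRightApprox R 𝒳 f) :
    ∃ (Q : ModuleCat.{u} R) (ι : Z →ₗ[R] Q) (δ : Q →ₗ[R] Y) (ρ : Q →ₗ[R] P),
      IsSES R ι δ ∧ ρ ∘ₗ ι = i ∘ₗ f ∧ π ∘ₗ ρ = δ := by
  obtain ⟨K, F, j, p, hK, _, hcover⟩ := h𝒳.exists_free_cover hY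
  obtain ⟨s, hsp⟩ := Module.projective_lifting_property π p hs.2.2
  obtain ⟨t, ht⟩ := hs.exists_lift (t := s ∘ₗ j) <| by
    rw [← LinearMap.comp_assoc, hsp, hcover.comp_eq_zero]
  obtain ⟨t', rfl⟩ := hf.2 K hK t
  refine ⟨_, _, _, AmalgamatedSum.desc (i ∘ₗ f) s ht, hcover.amalgamatedSum_inl t',
    AmalgamatedSum.desc_comp_inl _ _ _, AmalgamatedSum.hom_ext ?_ ?_⟩
  · rw [LinearMap.comp_assoc, AmalgamatedSum.desc_comp_inl, AmalgamatedSum.desc_comp_inl,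
      ← LinearMap.comp_assoc, hs.comp_eq_zero, LinearMap.zero_comp]
  · rw [LinearMap.comp_assoc, AmalgamatedSum.desc_comp_inr, AmalgamatedSum.desc_comp_inr, hsp]

theorem IsRightMinimal.isRightApprox_of_isSES (h𝒳 : IsResolving R 𝒳) {N P Y Z Q : ModuleCat.{u} R}
    {i : N →ₗ[R] P} {π : P →ₗ[R] Y} (hs : IsSES R i π) (hY : Y ∈ 𝒳) {f : Z →ₗ[R] N}
    (hmin : IsRightMinimal f) (hf : IsRightApprox R 𝒳 f) {ι : Z →ₗ[R] Q} {δ : Q →ₗ[R] Y}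
    (hQ : IsSES R ι δ) {ρ : Q →ₗ[R] P} (hρι : ρ ∘ₗ ι = i ∘ₗ f) (hπρ : π ∘ₗ ρ = δ) :
    IsRightApprox R 𝒳 ρ := by
  refine ⟨h𝒳.extClosed _ _ _ _ _ hQ hf.1 hY, fun W hW h => ?_⟩
  let pQ := fiberProduct.fst δ (π ∘ₗ h)
  let pW := fiberProduct.snd δ (π ∘ₗ h)
  have hcond : δ ∘ₗ pQ = (π ∘ₗ h) ∘ₗ pW := fiberProduct.condition δ (π ∘ₗ h)
  have hE := hQ.fiberProduct_snd (π ∘ₗ h)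
  set κ := fiberProduct.lift ι 0 (hQ.comp_eq_zero.trans (π ∘ₗ h).comp_zero.symm)
  have hpQκ : pQ ∘ₗ κ = ι := fiberProduct.fst_comp_lift _ _ _
  have hpWκ : pW ∘ₗ κ = 0 := fiberProduct.snd_comp_lift _ _ _
  obtain ⟨θ, hθ⟩ := hs.exists_lift (t := ρ ∘ₗ pQ - h ∘ₗ pW) <| by
    rw [LinearMap.comp_sub, ← LinearMap.comp_assoc, hπρ, hcond, LinearMap.comp_assoc, sub_self]
  have hθκ : θ ∘ₗ κ = f := by
    apply LinearMap.cancel_left hs.1 |>.mp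
    rw [← LinearMap.comp_assoc, hθ, LinearMap.sub_comp, LinearMap.comp_assoc, hpQκ, hρι,
      LinearMap.comp_assoc, hpWκ, LinearMap.comp_zero, sub_zero]
  obtain ⟨r, hrκ, hfr⟩ := hmin.exists_retraction hf (h𝒳.extClosed _ _ _ _ _ hE hf.1 hW) hθκ
  obtain ⟨h', hh'⟩ := hE.exists_desc (a := pQ - ι ∘ₗ r) <| by
    rw [LinearMap.sub_comp, LinearMap.comp_assoc, hrκ, hpQκ, LinearMap.comp_id, sub_self]
  refine ⟨h', (LinearMap.cancel_right hE.2.2).mp ?_⟩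
  rw [LinearMap.comp_assoc, hh', LinearMap.comp_sub, ← LinearMap.comp_assoc, hρι,
    LinearMap.comp_assoc, hfr, hθ, sub_sub_cancel]

theorem HasRightApprox.of_isSES [HenselianLocalRing R] (h𝒳 : IsResolving R 𝒳)
    {N P Y : ModuleCat.{u} R} {i : N →ₗ[R] P} {π : P →ₗ[R] Y} (hs : IsSES R i π)
    (hN : HasRightApprox R 𝒳 N) (hY : Y ∈ 𝒳) : HasRightApprox R 𝒳 P := by
  obtain ⟨Z, f, hf, hmin⟩ := hN.exists_isRightMinimal h𝒳
  obtain ⟨Q, ι, δ, ρ, hQ, hρι, hπρ⟩ := hf.exists_isSES_lift h𝒳 hs hY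
  exact ⟨Q, ρ, hmin.isRightApprox_of_isSES h𝒳 hs hY hf hQ hρι hπρ⟩

end Extension

section FinitePresentation

variable {R : Type u} [CommRing R] {𝒳 : Set (ModuleCat.{u} R)}

/-- Exactness of `Hom(-, A) → Hom(-, B) → Hom(-, C)` on `𝒳`. -/
def IsHomExact (𝒳 : Set (ModuleCat.{u} R)) {A B C : Type*} [AddCommGroup A] [AddCommGroup B]
    [AddCommGroup C] [Module R A] [Module R B] [Module R C] (d : A →ₗ[R] B) (e : B →ₗ[R] C) :
    Prop :=
  ∀ W ∈ 𝒳, Function.Exact (fun h : W →ₗ[R] A => d ∘ₗ h) (fun h : W →ₗ[R] B => e ∘ₗ h)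

theorem memCC_iff {C : ModuleCat.{u} R} :
    MemCC R 𝒳 C ↔ ∃ (X₀ X₁ : ModuleCat.{u} R) (d : X₁ →ₗ[R] X₀) (c : X₀ →ₗ[R] C),
      IsRightApprox R 𝒳 c ∧ X₁ ∈ 𝒳 ∧ IsHomExact 𝒳 d c :=
  ⟨fun ⟨X₀, X₁, d, c, hX₀, hX₁, h⟩ =>
    ⟨X₀, X₁, d, c, ⟨hX₀, fun W hW => (h W hW).1⟩, hX₁, fun W hW => (h W hW).2⟩,
  fun ⟨X₀, X₁, d, c, hc, hX₁, h⟩ =>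
    ⟨X₀, X₁, d, c, hc.1, hX₁, fun W hW => ⟨hc.2 W hW, h W hW⟩⟩⟩

theorem IsHomExact.comp_eq_zero {A : ModuleCat.{u} R} (hA : A ∈ 𝒳) {B C : Type*} [AddCommGroup B]
    [AddCommGroup C] [Module R B] [Module R C] {d : A →ₗ[R] B} {e : B →ₗ[R] C}
    (h : IsHomExact 𝒳 d e) : e ∘ₗ d = 0 :=
  (h A hA d).mpr ⟨LinearMap.id, d.comp_id⟩

theorem IsHomExact.of_comp_eq_zero {A B C : Type*} [AddCommGroup A] [AddCommGroup B]
    [AddCommGroup C] [Module R A] [Module R B] [Module R C] {d : A →ₗ[R] B} {e : B →ₗ[R] C}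
    (hed : e ∘ₗ d = 0)
    (hlift : ∀ W ∈ 𝒳, ∀ h : W →ₗ[R] B, e ∘ₗ h = 0 → ∃ h' : W →ₗ[R] A, d ∘ₗ h' = h) :
    IsHomExact 𝒳 d e := by
  refine fun W hW h => ⟨hlift W hW h, ?_⟩
  rintro ⟨h', rfl⟩
  exact congrArg (· ∘ₗ h') hed

theorem MemCC.exists_isHomExact (h𝒳 : IsResolving R 𝒳) {P C : ModuleCat.{u} R}
    (hC : MemCC R 𝒳 C) (hP : HasRightApprox R 𝒳 P) {e : P →ₗ[R] C}
    (he : ∀ W ∈ 𝒳, ∀ c : W →ₗ[R] C, ∃ s : W →ₗ[R] P, e ∘ₗ s = c) :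
    ∃ D ∈ 𝒳, ∃ d : D →ₗ[R] P, IsHomExact 𝒳 d e := by
  obtain ⟨X₀, X₁, d₁, c, hc, hX₁, hexact⟩ := memCC_iff.mp hC
  obtain ⟨T, p, hT, hp⟩ := hP
  obtain ⟨α, hα⟩ := hc.2 T hT (e ∘ₗ p)
  obtain ⟨s, rfl⟩ := he X₀ hc.1 c
  -- Subtracting `s ∘ α` moves `p` into the kernel of `e`.
  refine ⟨.of R (T × X₁), h𝒳.prod_mem hT hX₁, (p - s ∘ₗ α).coprod (s ∘ₗ d₁),
    .of_comp_eq_zero ?_ fun W hW h heh => ?_⟩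
  · rw [LinearMap.comp_coprod, LinearMap.comp_sub, ← hα, ← LinearMap.comp_assoc,
      ← LinearMap.comp_assoc, hexact.comp_eq_zero hX₁, sub_self, LinearMap.coprod_zero_left,
      LinearMap.zero_comp]
  · obtain ⟨τ, rfl⟩ := hp W hW h
    obtain ⟨β, hβ : d₁ ∘ₗ β = α ∘ₗ τ⟩ := (hexact W hW (α ∘ₗ τ)).mp <| by
      change (e ∘ₗ s) ∘ₗ α ∘ₗ τ = 0
      rw [← LinearMap.comp_assoc, hα, LinearMap.comp_assoc, heh]
    refine ⟨τ.prod β, ?_⟩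
    rw [LinearMap.coprod_comp_prod, LinearMap.sub_comp, LinearMap.comp_assoc, LinearMap.comp_assoc,
      hβ, sub_add_cancel]

theorem IsHomExact.snd_comp_of_fst {C M Y : Type*} [AddCommGroup C] [AddCommGroup M]
    [AddCommGroup Y] [Module R C] [Module R M] [Module R Y] {g : C →ₗ[R] M} {y : Y →ₗ[R] M}
    {D : ModuleCat.{u} R} (hD : D ∈ 𝒳) {d : D →ₗ[R] fiberProduct g y}
    (h : IsHomExact 𝒳 d (fiberProduct.fst g y)) :
    IsHomExact 𝒳 (fiberProduct.snd g y ∘ₗ d) y := by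
  refine .of_comp_eq_zero ?_ fun W hW w hyw => ?_
  · rw [← LinearMap.comp_assoc, ← fiberProduct.condition, LinearMap.comp_assoc,
      h.comp_eq_zero hD, LinearMap.comp_zero]
  · let w' : W →ₗ[R] fiberProduct g y := fiberProduct.lift 0 w (g.comp_zero.trans hyw.symm)
    obtain ⟨v, hv : d ∘ₗ v = w'⟩ := (h W hW w').mp (fiberProduct.fst_comp_lift _ _ _)
    exact ⟨v, by rw [LinearMap.comp_assoc, hv, fiberProduct.snd_comp_lift]⟩

end FinitePresentation

theorem stmt10_general (R : Type u) [CommRing R] [HenselianLocalRing R]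
    (𝒳 : Set (ModuleCat.{u} R)) (h𝒳 : IsResolving R 𝒳) (N C M : ModuleCat.{u} R)
    (f : ↥N →ₗ[R] ↥C) (g : ↥C →ₗ[R] ↥M) (hses : IsSES R f g) (hC : MemCC R 𝒳 C)
    (hM : HasRightApprox R 𝒳 M) (hN : HasRightApprox R 𝒳 N) : MemCC R 𝒳 M := by
  obtain ⟨Y, y, hy⟩ := hM
  let P : ModuleCat.{u} R := .of R (fiberProduct g y)
  have hP : HasRightApprox R 𝒳 P := .of_isSES h𝒳 (hses.fiberProduct_snd y) hN hy.1
  have hlift : ∀ W ∈ 𝒳, ∀ c : W →ₗ[R] C, ∃ s : W →ₗ[R] P, fiberProduct.fst g y ∘ₗ s = c := by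
    intro W hW c
    obtain ⟨b, hb⟩ := hy.2 W hW (g ∘ₗ c)
    exact ⟨fiberProduct.lift c b hb.symm, fiberProduct.fst_comp_lift _ _ _⟩
  obtain ⟨D, hD, d, hd⟩ := hC.exists_isHomExact h𝒳 hP hlift
  exact memCC_iff.mpr ⟨Y, D, fiberProduct.snd g y ∘ₗ d, y, hy, hD, hd.snd_comp_of_fst hD⟩

/-- Over a henselian Gorenstein local ring, given a short exact sequence
`0 → N → C → M → 0` with `C ∈ 𝒞(𝒳)` and `M, N ∈ rap 𝒳`, one has `M ∈ 𝒞(𝒳)`. -/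
theorem stmt10 (R : Type u) [CommRing R] [IsNoetherianRing R] [IsLocalRing R]
    [HenselianLocalRing R] (hG : IsGorensteinLocalRing R)
    (𝒳 : Set (ModuleCat.{u} R)) (h𝒳 : IsResolving R 𝒳)
    (N C M : ModuleCat.{u} R) (hNfg : Module.Finite R N) (hCfg : Module.Finite R C)
    (hMfg : Module.Finite R M) (f : ↥N →ₗ[R] ↥C) (g : ↥C →ₗ[R] ↥M)
    (hses : IsSES R f g) (hC : MemCC R 𝒳 C)
    (hM : HasRightApprox R 𝒳 M) (hN : HasRightApprox R 𝒳 N) :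
    MemCC R 𝒳 M :=
  stmt10_general R 𝒳 h𝒳 N C M f g hses hC hM hN
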